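/- arXiv:1002.4318 — 2 statements merged into one kernel-verified Lean document; each statement's English description precedes it below -/
import Mathlib

section
/- The set {Δ, J, Γ} is a homogeneous system of parameters for F[V]^{SL_2(F_q)}: the only common zero of Δ, J, Γ over an algebraic closure of F is the origin of the three-dimensional affine space; equivalently, F[V] is a finitely generated module over the subalgebra F[Δ, J, Γ]. -/
open MvPolynomial
open scoped Classical

/-!
On the cone `Δ = 0` one has `a₀ (a₂ + 2 c a₁ + (c² - k) a₀) = (a₁ + c a₀)² - k a₀²`. At a point
with `Δ = 0` and `a₀ ≠ 0`, a vanishing factor of `γ₀` therefore gives `a₁ / a₀ = -c` with `c ∈ F_q`,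
while a vanishing factor of `γ_k` gives `(a₁ / a₀ + d)² = k`, so that `k = (d - c)²` is a square.
Hence the common zeros of `Δ`, `J`, `Γ` have `a₀ = 0`, and then `a₁ = a₂ = 0`.

Finiteness follows for any set `s` of forms of positive degree whose only common zero is the origin:
by the Nullstellensatz every variable is nilpotent modulo `(s)`, so `F[V] / (s)` is
finite-dimensional over `F`, and by the graded Nakayama lemma the homogeneous components of lifts of
a finite spanning set generate `F[V]` as a module over `F[s]`.
-/

section GradedNakayama

variable {R S : Type*} [CommSemiring R] [CommSemiring S] [Algebra R S] (𝒜 : ℕ → Submodule R S)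
  [GradedAlgebra 𝒜] {s : Set S}

lemma decompose_mem_of_mem_ideal_span (hs : ∀ f ∈ s, ∃ e ≠ 0, f ∈ 𝒜 e)
    {M : Submodule (Algebra.adjoin R s) S} {d : ℕ} (hM : ∀ i < d, ∀ y ∈ 𝒜 i, y ∈ M)
    {x : S} (hx : x ∈ Ideal.span s) : (DirectSum.decompose 𝒜 x d : S) ∈ M := by
  induction hx using Submodule.closure_induction with
  | zero => simp
  | add x y _ _ hx hy => simpa only [DirectSum.decompose_add, DirectSum.add_apply,
      Submodule.coe_add] using add_mem hx hy
  | smul_mem a f hf =>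
    obtain ⟨e, he, hfe⟩ := hs f hf
    rw [smul_eq_mul, DirectSum.coe_decompose_mul_of_right_mem 𝒜 d hfe]
    split_ifs with hed
    · have ha : (DirectSum.decompose 𝒜 a (d - e) : S) ∈ M :=
        hM (d - e) (by omega) _ (SetLike.coe_mem _)
      rw [mul_comm]
      exact M.smul_mem ⟨f, Algebra.subset_adjoin hf⟩ ha
    · exact zero_mem M

theorem eq_top_of_sup_ideal_span_eq_top (hs : ∀ f ∈ s, ∃ e ≠ 0, f ∈ 𝒜 e)
    {M : Submodule (Algebra.adjoin R s) S} {U : Submodule R S}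
    (hU : U ⊔ (Ideal.span s).restrictScalars R = ⊤)
    (hUM : ∀ u ∈ U, ∀ d, (DirectSum.decompose 𝒜 u d : S) ∈ M) : M = ⊤ := by
  have homogeneous_mem (d : ℕ) : ∀ x ∈ 𝒜 d, x ∈ M := by
    induction d using Nat.strong_induction_on with
    | h d ih =>
      intro x hx
      obtain ⟨u, hu, v, hv, rfl⟩ := Submodule.mem_sup.mp (hU ▸ Submodule.mem_top : x ∈ _)
      rw [← DirectSum.decompose_of_mem_same 𝒜 hx, DirectSum.decompose_add]
      exact add_mem (hUM u hu d) (decompose_mem_of_mem_ideal_span 𝒜 hs ih hv)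
  refine eq_top_iff.mpr fun x _ => ?_
  rw [← DirectSum.sum_support_decompose 𝒜 x]
  exact sum_mem fun d _ => homogeneous_mem d _ (SetLike.coe_mem _)

end GradedNakayama

lemma exists_finset_span_sup_eq_top {R M : Type*} [Ring R] [AddCommGroup M] [Module R M]
    (N : Submodule R M) [Module.Finite R (M ⧸ N)] :
    ∃ t : Finset M, Submodule.span R (t : Set M) ⊔ N = ⊤ := by
  obtain ⟨b, hb⟩ := Module.Finite.fg_top (R := R) (M := M ⧸ N)
  obtain ⟨t, -, rfl⟩ := Finset.subset_set_image_iff.mp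
    (show (b : Set (M ⧸ N)) ⊆ N.mkQ '' Set.univ by simp [N.mkQ_surjective.range_eq])
  refine ⟨t, ?_⟩
  rwa [sup_comm, ← Submodule.map_mkQ_eq_top, Submodule.map_span, ← Finset.coe_image]

theorem finite_adjoin_of_finite_quotient_span {R S : Type*} [CommRing R] [CommRing S] [Algebra R S]
    (𝒜 : ℕ → Submodule R S) [GradedAlgebra 𝒜] {s : Set S} (hs : ∀ f ∈ s, ∃ e ≠ 0, f ∈ 𝒜 e)
    [Module.Finite R (S ⧸ Ideal.span s)] : Module.Finite (Algebra.adjoin R s) S := by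
  have := Module.Finite.equiv (Submodule.Quotient.restrictScalarsEquiv R (Ideal.span s)).symm
  obtain ⟨t, ht⟩ := exists_finset_span_sup_eq_top ((Ideal.span s).restrictScalars R)
  let components : Finset S := t.biUnion fun x =>
    (DirectSum.decompose 𝒜 x).support.image fun d => ↑(DirectSum.decompose 𝒜 x d)
  refine ⟨components, eq_top_of_sup_ideal_span_eq_top 𝒜 hs ht fun u hu d => ?_⟩
  let M := Submodule.span (Algebra.adjoin R s) (components : Set S)
  suffices h : Submodule.span R t ≤ (M.restrictScalars R).comap (GradedAlgebra.proj 𝒜 d) from h hu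
  refine Submodule.span_le.mpr fun x hx => ?_
  change (DirectSum.decompose 𝒜 x d : S) ∈ M
  by_cases hd : d ∈ (DirectSum.decompose 𝒜 x).support
  · exact Submodule.subset_span
      (Finset.mem_biUnion.mpr ⟨x, hx, Finset.mem_image_of_mem _ hd⟩)
  · rw [DFinsupp.notMem_support_iff.mp hd]
    exact zero_mem M

theorem finite_quotient_of_X_mem_radical {σ R : Type*} [Finite σ] [CommRing R]
    {I : Ideal (MvPolynomial σ R)} (hI : ∀ i, X i ∈ I.radical) :
    Module.Finite R (MvPolynomial σ R ⧸ I) := by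
  let π := Ideal.Quotient.mkₐ R I
  have hadjoin : Algebra.adjoin R (Set.range fun i => π (X i)) = ⊤ := by
    rw [Set.range_comp' π X, ← AlgHom.map_adjoin, adjoin_range_X, Algebra.map_top,
      AlgHom.range_eq_top]
    exact Ideal.Quotient.mkₐ_surjective R I
  have hint : ∀ y ∈ Set.range fun i => π (X i), IsIntegral R y := by
    rintro _ ⟨i, rfl⟩
    obtain ⟨n, hn⟩ := hI i
    have hpow : π (X i) ^ n = 0 := by
      rw [← map_pow]
      exact Ideal.Quotient.eq_zero_iff_mem.mpr hn
    exact ⟨Polynomial.X ^ n, Polynomial.monic_X_pow n, by simp [hpow]⟩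
  have := Algebra.finite_adjoin_of_finite_of_isIntegral (Set.finite_range _) hint
  rw [hadjoin] at this
  exact Module.Finite.equiv Subalgebra.topEquiv.toLinearEquiv

theorem finite_adjoin_of_forall_aeval_eq_zero {σ k : Type*} (K : Type*) [Finite σ] [Field k]
    [Field K] [Algebra k K] [IsAlgClosed K] {s : Set (MvPolynomial σ k)}
    (hs : ∀ f ∈ s, ∃ d ≠ 0, f.IsHomogeneous d)
    (hzero : ∀ x : σ → K, (∀ f ∈ s, aeval x f = 0) → x = 0) :
    Module.Finite (Algebra.adjoin k s) (MvPolynomial σ k) := by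
  have hX (i : σ) : X i ∈ (Ideal.span s).radical := by
    rw [← vanishingIdeal_zeroLocus_eq_radical (K := K), zeroLocus_span]
    intro x hx
    simp [hzero x hx]
  have := finite_quotient_of_X_mem_radical hX
  let _ := gradedAlgebra (σ := σ) (R := k)
  exact finite_adjoin_of_finite_quotient_span (homogeneousSubmodule σ k) hs

lemma isSquare_of_discriminant_eq_zero {k K : Type*} [CommRing k] [CommRing K] [IsDomain K]
    {g : k →+* K} (hg : Function.Injective g) {a₀ a₁ a₂ : K} (ha₀ : a₀ ≠ 0) {b c d : k}
    (hΔ : a₁ ^ 2 - a₀ * a₂ = 0) (hc : a₂ + 2 * g c * a₁ + g c ^ 2 * a₀ = 0)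
    (hd : a₂ + 2 * g d * a₁ + (g d ^ 2 - g b) * a₀ = 0) : IsSquare b := by
  have hroot : a₁ + g c * a₀ = 0 := by
    refine pow_eq_zero_iff two_ne_zero |>.mp ?_
    linear_combination hΔ + a₀ * hc
  have hmul : (g (d - c) ^ 2 - g b) * a₀ ^ 2 = 0 := by
    rw [map_sub]
    linear_combination a₀ * hd + hΔ - (a₁ + 2 * g d * a₀ - g c * a₀) * hroot
  have hsq : g (d - c) ^ 2 = g b :=
    sub_eq_zero.mp ((mul_eq_zero.mp hmul).resolve_right (pow_ne_zero 2 ha₀))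
  exact ⟨d - c, hg (by rw [← hsq, map_mul, sq])⟩

lemma eq_zero_of_discriminant_eq_zero {k K : Type*} [CommRing k] [Fintype k] [CommRing K]
    [IsDomain K] {g : k →+* K} (hg : Function.Injective g) {Q : Finset k}
    (hQ : ∀ b ∈ Q, ¬ IsSquare b) {x : Fin 3 → K} (hΔ : x 1 ^ 2 - x 0 * x 2 = 0)
    (hJ : x 0 * ∏ c : k, (x 2 + 2 * g c * x 1 + g c ^ 2 * x 0) = 0)
    (hΓ : ∏ b ∈ Q, ∏ c : k, (x 2 + 2 * g c * x 1 + (g c ^ 2 - g b) * x 0) = 0) : x = 0 := by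
  obtain ⟨b, hb, hΓb⟩ := Finset.prod_eq_zero_iff.mp hΓ
  obtain ⟨d, -, hd⟩ := Finset.prod_eq_zero_iff.mp hΓb
  have h₀ : x 0 = 0 := by
    by_contra h₀
    obtain ⟨c, -, hc⟩ := Finset.prod_eq_zero_iff.mp ((mul_eq_zero.mp hJ).resolve_left h₀)
    exact hQ b hb (isSquare_of_discriminant_eq_zero hg h₀ hΔ hc hd)
  have h₁ : x 1 = 0 := by simpa [h₀] using hΔ
  have h₂ : x 2 = 0 := by simpa [h₀, h₁] using hd
  funext i
  fin_cases i <;> assumption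

lemma isHomogeneous_prod_add_C_mul_X {ι σ R : Type*} [CommSemiring R] (t : Finset ι) (i j l : σ)
    (a b : ι → R) :
    (∏ m ∈ t, (X i + C (a m) * X j + C (b m) * X l : MvPolynomial σ R)).IsHomogeneous t.card := by
  simpa using IsHomogeneous.prod t _ (fun _ => 1) fun m _ =>
    ((isHomogeneous_X R i).add (isHomogeneous_C_mul_X (a m) j)).add (isHomogeneous_C_mul_X (b m) l)

lemma nonzero_nonsquares_nonempty {k : Type*} [Field k] [Fintype k] (hk : ringChar k ≠ 2) :
    (Finset.univ.filter fun b : k => b ≠ 0 ∧ ¬ IsSquare b).Nonempty := by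
  obtain ⟨b, hb⟩ := FiniteField.exists_nonsquare hk
  exact ⟨b, Finset.mem_filter.mpr
    ⟨Finset.mem_univ b, fun hb₀ => hb (hb₀ ▸ IsSquare.zero), hb⟩⟩

/-- `{Δ, J, Γ}` is a homogeneous system of parameters: the only common zero of `Δ`, `J`, `Γ`
over an algebraic closure of `F` is the origin, and `F[V]` is a finite module over
the subalgebra `F[Δ, J, Γ]`. -/
theorem hsop_for_SL2 (F : Type*) [Field F] (p n q : ℕ) (hp : p.Prime) (hp2 : p ≠ 2)
    [CharP F p] (hn : n ≠ 0) (hq : q = p ^ n)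
    (Fq : Type*) [Field Fq] [Fintype Fq] [Algebra Fq F] (hcard : Fintype.card Fq = q)
    (Δ γ₀ Γ J : MvPolynomial (Fin 3) F)
    (hΔ : Δ = X 1 ^ 2 - X 0 * X 2)
    (hγ : γ₀ = ∏ c : Fq,
      (X 2 + C (2 * algebraMap Fq F c) * X 1 + C ((algebraMap Fq F c) ^ 2) * X 0))
    (hΓ : Γ = ∏ k ∈ Finset.univ.filter (fun k : Fq => k ≠ 0 ∧ ¬ IsSquare k),
      ∏ c : Fq, (X 2 + C (2 * algebraMap Fq F c) * X 1 +
        C ((algebraMap Fq F c) ^ 2 - algebraMap Fq F k) * X 0))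
    (hJ : J = X 0 * γ₀) :
    (∀ x : Fin 3 → AlgebraicClosure F,
      aeval x Δ = 0 → aeval x J = 0 → aeval x Γ = 0 → x = 0) ∧
    Module.Finite (Algebra.adjoin F {Δ, J, Γ}) (MvPolynomial (Fin 3) F) := by
  have hFq : ringChar Fq ≠ 2 := by
    have : CharP Fq p := (RingHom.charP_iff _ (algebraMap Fq F).injective p).mpr ‹_›
    rwa [ringChar.eq Fq p]
  have hzero (x : Fin 3 → AlgebraicClosure F) (hxΔ : aeval x Δ = 0) (hxJ : aeval x J = 0)
      (hxΓ : aeval x Γ = 0) : x = 0 := by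
    have htwo : algebraMap F (AlgebraicClosure F) 2 = 2 := map_ofNat _ 2
    subst hJ hγ hΓ hΔ
    exact eq_zero_of_discriminant_eq_zero ((algebraMap F _).comp (algebraMap Fq F)).injective
      (Q := {k | k ≠ 0 ∧ ¬ IsSquare k}) (by simp) (by simpa using hxΔ)
      (by simpa [htwo] using hxJ) (by simpa [htwo] using hxΓ)
  have hhom : ∀ f ∈ ({Δ, J, Γ} : Set _), ∃ d ≠ 0, f.IsHomogeneous d := by
    rintro f (rfl | rfl | rfl)
    · exact ⟨2, two_ne_zero, hΔ ▸ ((isHomogeneous_X F 1).pow 2).sub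
        ((isHomogeneous_X F 0).mul (isHomogeneous_X F 2))⟩
    · exact ⟨1 + Fintype.card Fq, by omega, hJ ▸ hγ ▸ (isHomogeneous_X F 0).mul
        (isHomogeneous_prod_add_C_mul_X ..)⟩
    · exact ⟨_, by simp [(nonzero_nonsquares_nonempty hFq).ne_empty], hΓ ▸
        IsHomogeneous.prod _ _ _ fun b _ => isHomogeneous_prod_add_C_mul_X ..⟩
  exact ⟨hzero, finite_adjoin_of_forall_aeval_eq_zero (AlgebraicClosure F) hhom fun x hx =>
    hzero x (hx _ (by simp)) (hx _ (by simp)) (hx _ (by simp))⟩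
end

section
/- The ring of invariants F[V]^{SL_2(F_q)} is generated as an F-algebra by Δ, J, Γ and B, and there exists a polynomial Φ in three variables over F such that B² = Δ^q·Γ² + J·Φ(Δ, J, Γ); in particular J divides B² − Δ^q·Γ² in F[V]. -/
open MvPolynomial
open scoped Classical

/-- The algebra automorphism of `F[a0,a1,a2]` induced by the upper-triangular matrix `σ_c`:
`a0 ↦ a0`, `a1 ↦ a1 + c·a0`, `a2 ↦ a2 + 2c·a1 + c²·a0`.  Here `a_i = X i`. -/
noncomputable def σP (F : Type*) [Field F] (c : F) :
    MvPolynomial (Fin 3) F →ₐ[F] MvPolynomial (Fin 3) F :=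
  aeval ![X 0, X 1 + C c * X 0, X 2 + C (2 * c) * X 1 + C (c ^ 2) * X 0]

/-- The algebra automorphism of `F[a0,a1,a2]` induced by `τ`: `a0 ↦ a2`, `a1 ↦ -a1`, `a2 ↦ a0`. -/
noncomputable def τA (F : Type*) [Field F] :
    MvPolynomial (Fin 3) F →ₐ[F] MvPolynomial (Fin 3) F :=
  aeval ![X 2, -X 1, X 0]

/-!
Every nonzero `K`-rational linear form divides exactly one of `J`, `Γ`, `B`, according to whether
the discriminant of its coefficient vector is zero, a nonsquare or a nonzero square; hence these
products are invariant up to a scalar, and a braid relation forces the scalar to be `1`.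

The reflection `a1 ↦ -a1` splits an invariant into an even and an odd part. An odd one vanishes on
`a1 = 0`, hence on its whole orbit, so it is `B` times an even one. For an even invariant, look at
the restriction to `a0 = 0`: the torus and the translations show that, modulo polynomials in
`X 1 ^ 2`, the restriction of `Δ`, it is divisible by the restriction of `Γ`, so by induction on the
degree it is the restriction of a polynomial in `Δ` and `Γ`. The difference vanishes on `a0 = 0`,
hence on its orbit, so it is divisible by `J`, and one inducts on the degree again. The relation
holds because `B ^ 2` and `Δ ^ q * Γ ^ 2` have the same restriction to `a0 = 0`.
-/

section FixedSubalgebra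

variable {R A : Type*} [CommRing R] [CommRing A] [Algebra R A]

/-- The subalgebra of the elements fixed by every endomorphism in `Φ`. -/
def fixedSubalgebra (Φ : Set (A →ₐ[R] A)) : Subalgebra R A :=
  ⨅ φ ∈ Φ, AlgHom.equalizer φ (AlgHom.id R A)

lemma mem_fixedSubalgebra {Φ : Set (A →ₐ[R] A)} {x : A} :
    x ∈ fixedSubalgebra Φ ↔ ∀ φ ∈ Φ, φ x = x := by
  simp [fixedSubalgebra, Algebra.mem_iInf]

lemma mem_fixedSubalgebra_of_mul_mem [IsDomain A] {Φ : Set (A →ₐ[R] A)} {x y : A} (hx0 : x ≠ 0)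
    (hx : x ∈ fixedSubalgebra Φ) (hxy : x * y ∈ fixedSubalgebra Φ) : y ∈ fixedSubalgebra Φ := by
  rw [mem_fixedSubalgebra] at *
  intro φ hφ
  have h := hxy φ hφ
  rw [map_mul, hx φ hφ] at h
  exact mul_left_cancel₀ hx0 h

end FixedSubalgebra

section Diagonal

variable {ι R : Type*}

/-- The diagonal substitution `X i ↦ a i * X i`. -/
noncomputable def diagHom [CommSemiring R] (a : ι → R) :
    MvPolynomial ι R →ₐ[R] MvPolynomial ι R :=
  aeval fun i ↦ C (a i) * X i

@[simp] lemma diagHom_X [CommSemiring R] (a : ι → R) (i : ι) : diagHom a (X i) = C (a i) * X i :=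
  aeval_X _ _

lemma diagHom_C [CommSemiring R] (a : ι → R) (r : R) : diagHom a (C r) = C r :=
  (diagHom a).commutes r

lemma coeff_diagHom [CommSemiring R] (a : ι → R) (f : MvPolynomial ι R) (m : ι →₀ ℕ) :
    coeff m (diagHom a f) = coeff m f * m.prod fun i k ↦ a i ^ k := by
  induction f using MvPolynomial.induction_on' with
  | monomial n r =>
    have h : diagHom a (monomial n r) = monomial n (r * n.prod fun i k ↦ a i ^ k) := by
      rw [diagHom, aeval_monomial, algebraMap_eq]
      simp only [mul_pow, Finsupp.prod_mul, ← map_pow, ← map_finsuppProd]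
      rw [← mul_assoc, ← C_mul, ← monomial_eq]
    rw [h, coeff_monomial, coeff_monomial]
    split_ifs with hnm
    · rw [hnm]
    · rw [zero_mul]
  | add f g hf hg => rw [map_add, coeff_add, hf, hg, coeff_add, add_mul]

lemma diagHom_diagHom [CommSemiring R] (a b : ι → R) (f : MvPolynomial ι R) :
    diagHom a (diagHom b f) = diagHom (a * b) f := by
  ext m
  simp only [coeff_diagHom, Pi.mul_apply, mul_pow, Finsupp.prod_mul]
  ring

lemma diagHom_one [CommSemiring R] (f : MvPolynomial ι R) : diagHom (1 : ι → R) f = f := by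
  ext m
  simp [coeff_diagHom]

lemma totalDegree_diagHom_le [CommSemiring R] (a : ι → R) (f : MvPolynomial ι R) :
    (diagHom a f).totalDegree ≤ f.totalDegree := by
  refine totalDegree_le_of_support_subset fun m hm ↦ ?_
  rw [mem_support_iff, coeff_diagHom] at hm
  exact mem_support_iff.2 (left_ne_zero_of_mul hm)

lemma isHomogeneous_diagHom [CommSemiring R] (a : ι → R) {f : MvPolynomial ι R} {n : ℕ}
    (hf : f.IsHomogeneous n) : (diagHom a f).IsHomogeneous n := by
  intro m hm
  rw [coeff_diagHom] at hm
  exact hf (left_ne_zero_of_mul hm)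

lemma prod_pow_eq_one_of_mem_support [CommRing R] [IsDomain R] {a : ι → R}
    {f : MvPolynomial ι R} (hf : diagHom a f = f) {m : ι →₀ ℕ} (hm : m ∈ f.support) :
    (m.prod fun i k ↦ a i ^ k) = 1 := by
  refine mul_left_cancel₀ (mem_support_iff.1 hm) ?_
  rw [← coeff_diagHom, hf, mul_one]

lemma X_pow_dvd_of_forall_le [CommSemiring R] {i : ι} {n : ℕ} {f : MvPolynomial ι R}
    (hf : ∀ m ∈ f.support, n ≤ m i) : X i ^ n ∣ f := by
  rw [f.as_sum]
  refine Finset.dvd_sum fun m hm ↦ ?_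
  rw [X_pow_eq_monomial, monomial_dvd_monomial]
  exact ⟨Or.inr (Finsupp.single_le_iff.2 (hf m hm)), one_dvd _⟩

lemma X_dvd_sub_diagHom [CommRing R] {a : ι → R} {i : ι} (ha : ∀ j ≠ i, a j = 1)
    (f : MvPolynomial ι R) : X i ∣ f - diagHom a f := by
  rw [← pow_one (X i)]
  refine X_pow_dvd_of_forall_le fun m hm ↦ Nat.one_le_iff_ne_zero.2 fun hmi ↦ ?_
  rw [mem_support_iff, coeff_sub, coeff_diagHom, Finsupp.prod, Finset.prod_eq_one, mul_one,
    sub_self] at hm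
  · exact hm rfl
  · intro j hj
    rw [ha j (by rintro rfl; exact (Finsupp.mem_support_iff.1 hj) hmi), one_pow]

end Diagonal

section Lift

variable {ι κ R : Type*} [CommRing R] [IsDomain R]

-- Successive approximation: `P` has positive degree, so each step lowers the degree of the error.
lemma exists_lift {ρ : MvPolynomial ι R →ₐ[R] MvPolynomial κ R}
    (hρ : ∀ f, (ρ f).totalDegree ≤ f.totalDegree) {S : Subalgebra R (MvPolynomial ι R)}
    {T : Set (MvPolynomial κ R)} {P : MvPolynomial ι R} (hPS : P ∈ S)
    (hP : P.totalDegree ≤ (ρ P).totalDegree) (hpos : 0 < (ρ P).totalDegree)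
    (step : ∀ h ∈ T, ∃ f ∈ S, f.totalDegree ≤ h.totalDegree ∧ ∃ g ∈ T, h = ρ f + ρ P * g)
    {h : MvPolynomial κ R} (hT : h ∈ T) :
    ∃ f ∈ S, f.totalDegree ≤ h.totalDegree ∧ ρ f = h := by
  induction hd : h.totalDegree using Nat.strong_induction_on generalizing h with
  | _ d ih =>
    subst hd
    obtain ⟨f, hfS, hf, g, hgT, hfg⟩ := step h hT
    rcases eq_or_ne g 0 with rfl | hg
    · exact ⟨f, hfS, hf, by rw [hfg, mul_zero, add_zero]⟩
    have hPg : (ρ P).totalDegree + g.totalDegree ≤ h.totalDegree := by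
      have hP0 : ρ P ≠ 0 := by
        rintro h0
        simp [h0] at hpos
      rw [← totalDegree_mul_of_isDomain hP0 hg, eq_sub_of_add_eq' hfg.symm]
      exact (totalDegree_sub _ _).trans (max_le le_rfl ((hρ f).trans hf))
    obtain ⟨f', hfS', hf', rfl⟩ := ih g.totalDegree (by omega) hgT rfl
    refine ⟨f + P * f', add_mem hfS (mul_mem hPS hfS'), ?_, by rw [map_add, map_mul, ← hfg]⟩
    refine (totalDegree_add _ _).trans (max_le hf ((totalDegree_mul _ _).trans ?_))
    omega

end Lift

section LinearForms

variable {ι : Type*} [Fintype ι] (F : Type*) {K : Type*} [Field F] [Field K] [Algebra K F]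

/-- The linear form with coefficient vector `b`, the coefficients being taken in a subfield `K`. -/
noncomputable def linForm (b : ι → K) : MvPolynomial ι F :=
  ∑ i, C (algebraMap K F (b i)) * X i

lemma coeff_linForm (b : ι → K) (j : ι) :
    coeff (Finsupp.single j 1) (linForm F b) = algebraMap K F (b j) := by
  simp [linForm, coeff_sum, coeff_C_mul, coeff_X, Finsupp.single_left_inj]

lemma isHomogeneous_linForm (b : ι → K) : (linForm F b).IsHomogeneous 1 :=
  IsHomogeneous.sum _ _ _ fun i _ ↦ isHomogeneous_C_mul_X _ i

lemma linForm_ne_zero {b : ι → K} (hb : b ≠ 0) : linForm F b ≠ 0 := by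
  obtain ⟨j, hj⟩ := Function.ne_iff.1 hb
  intro h
  have := coeff_linForm F b j
  rw [h, coeff_zero] at this
  exact hj ((map_eq_zero _).1 this.symm)

lemma irreducible_linForm {b : ι → K} (hb : b ≠ 0) : Irreducible (linForm F b) := by
  obtain ⟨j, hj⟩ := Function.ne_iff.1 hb
  refine irreducible_of_totalDegree_eq_one
    ((isHomogeneous_linForm F b).totalDegree (linForm_ne_zero F hb)) fun x hx ↦ ?_
  have hxj := hx (Finsupp.single j 1)
  rw [coeff_linForm] at hxj
  exact (ne_zero_of_dvd_ne_zero (by simpa using hj) hxj).isUnit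

lemma linForm_smul (u : K) (b : ι → K) :
    linForm F (u • b) = C (algebraMap K F u) * linForm F b := by
  simp only [linForm, Pi.smul_apply, smul_eq_mul, map_mul, Finset.mul_sum, mul_assoc]

lemma linForm_smul_dvd_iff {u : K} (hu : u ≠ 0) {b : ι → K} {P : MvPolynomial ι F} :
    linForm F (u • b) ∣ P ↔ linForm F b ∣ P := by
  rw [linForm_smul, IsUnit.mul_left_dvd (((IsUnit.mk0 u hu).map _).map C)]

lemma isRelPrime_linForm {b b' : ι → K} {i j : ι} (h : b i * b' j ≠ b j * b' i) :
    IsRelPrime (linForm F b) (linForm F b') := by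
  have hb : b ≠ 0 := by
    rintro rfl
    simp at h
  rw [(irreducible_linForm F hb).isRelPrime_iff_not_dvd]
  rintro ⟨g, hg⟩
  let z : ι → F := Pi.single i (algebraMap K F (b j)) - Pi.single j (algebraMap K F (b i))
  have heval (v : ι → K) : eval z (linForm F v) = algebraMap K F (v i * b j - v j * b i) := by
    simp [z, linForm, mul_sub, Finset.sum_sub_distrib, Pi.single_apply]
  have hb' := congrArg (eval z) hg
  rw [map_mul, heval, heval, mul_comm (b i), sub_self, map_zero, zero_mul, map_eq_zero] at hb'
  exact h (by linear_combination -hb')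

end LinearForms

section Squares

variable (K : Type*) [Field K] [Fintype K]

/-- The nonzero quadratic residues of a finite field. -/
noncomputable def nonzeroSquares : Finset K := Finset.univ.filter fun k ↦ k ≠ 0 ∧ IsSquare k

/-- The quadratic nonresidues of a finite field. -/
noncomputable def nonSquares : Finset K := Finset.univ.filter fun k ↦ k ≠ 0 ∧ ¬ IsSquare k

variable {K}

lemma mem_nonzeroSquares {k : K} : k ∈ nonzeroSquares K ↔ k ≠ 0 ∧ IsSquare k := by
  simp [nonzeroSquares]

lemma mem_nonSquares {k : K} : k ∈ nonSquares K ↔ ¬ IsSquare k := by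
  simp only [nonSquares, Finset.mem_filter_univ, and_iff_right_iff_imp]
  rintro hk rfl
  exact hk IsSquare.zero

lemma card_nonzeroSquares_eq (hK : ringChar K ≠ 2) :
    (nonzeroSquares K).card = (nonSquares K).card := by
  have hsum := quadraticChar_sum_zero hK
  simp only [quadraticChar_apply, quadraticCharFun] at hsum
  have hsplit (k : K) : (if k = 0 then (0 : ℤ) else if IsSquare k then 1 else -1) =
      (if k ≠ 0 ∧ IsSquare k then 1 else 0) - if k ≠ 0 ∧ ¬ IsSquare k then 1 else 0 := by
    split_ifs <;> simp_all
  simp only [hsplit, Finset.sum_sub_distrib, Finset.sum_boole, sub_eq_zero] at hsum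
  exact_mod_cast hsum

lemma card_nonSquares_add_self (hK : ringChar K ≠ 2) :
    (nonSquares K).card + (nonSquares K).card = Fintype.card K - 1 := by
  nth_rewrite 1 [← card_nonzeroSquares_eq hK]
  rw [nonzeroSquares, nonSquares, ← Finset.filter_filter, ← Finset.filter_filter,
    Finset.card_filter_add_card_filter_not, Finset.filter_ne', Finset.card_erase_of_mem
    (Finset.mem_univ 0), Finset.card_univ]

end Squares

section FormProducts

variable (F : Type*) {K : Type*} [Field F] [Field K] [Algebra K F]

/-- The discriminant of the binary quadratic form with coefficient vector `b`. Up to a square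
factor it classifies the `SL₂(K)`-orbits of the linear forms `linForm F b` up to scalars. -/
def dualDiscr (b : Fin 3 → K) : K := b 1 ^ 2 - 4 * b 0 * b 2

/-- The linear form `a2 + 2c·a1 + (c² - k)·a0`, of discriminant `4k`: the factors of `γ_k`. -/
noncomputable def discForm (c k : K) : MvPolynomial (Fin 3) F := linForm F ![c ^ 2 - k, 2 * c, 1]

/-- The linear form `a1 + c·a0`, of discriminant `1`: the factors of `β`. -/
noncomputable def slopeForm (c : K) : MvPolynomial (Fin 3) F := linForm F ![c, 1, 0]

lemma discForm_eq (c k : K) : discForm F c k =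
    X 2 + C (2 * algebraMap K F c) * X 1 + C (algebraMap K F c ^ 2 - algebraMap K F k) * X 0 := by
  simp only [discForm, linForm, Fin.sum_univ_three, Matrix.cons_val, map_sub, map_pow, map_mul,
    map_ofNat, map_one]
  ring

lemma slopeForm_eq (c : K) : slopeForm F c = X 1 + C (algebraMap K F c) * X 0 := by
  simp only [slopeForm, linForm, Fin.sum_univ_three, Matrix.cons_val, map_one, map_zero]
  ring

lemma X_zero_eq_linForm : (X 0 : MvPolynomial (Fin 3) F) = linForm F (![1, 0, 0] : Fin 3 → K) := by
  simp [linForm, Fin.sum_univ_three]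

variable {F}

lemma linForm_dvd_iff_discForm_dvd (h2 : (2 : K) ≠ 0) {b : Fin 3 → K} (hb : b 2 ≠ 0)
    {P : MvPolynomial (Fin 3) F} :
    linForm F b ∣ P ↔ discForm F (b 1 / (2 * b 2)) (dualDiscr b / (2 * b 2) ^ 2) ∣ P := by
  have h : b = b 2 • ![(b 1 / (2 * b 2)) ^ 2 - dualDiscr b / (2 * b 2) ^ 2,
      2 * (b 1 / (2 * b 2)), 1] := by
    ext i
    fin_cases i <;> simp [dualDiscr] <;> field_simp
    ring
  nth_rewrite 1 [h]
  exact linForm_smul_dvd_iff F hb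

lemma linForm_dvd_iff_slopeForm_dvd {b : Fin 3 → K} (hb2 : b 2 = 0) (hb1 : b 1 ≠ 0)
    {P : MvPolynomial (Fin 3) F} : linForm F b ∣ P ↔ slopeForm F (b 0 / b 1) ∣ P := by
  have h : b = b 1 • ![b 0 / b 1, 1, 0] := by
    ext i
    fin_cases i <;> simp [hb2, mul_div_cancel₀, hb1]
  nth_rewrite 1 [h]
  exact linForm_smul_dvd_iff F hb1

lemma linForm_dvd_iff_X_zero_dvd {b : Fin 3 → K} (hb2 : b 2 = 0) (hb1 : b 1 = 0) (hb0 : b 0 ≠ 0)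
    {P : MvPolynomial (Fin 3) F} : linForm F b ∣ P ↔ X 0 ∣ P := by
  have h : b = b 0 • ![1, 0, 0] := by
    ext i
    fin_cases i <;> simp [hb2, hb1]
  nth_rewrite 1 [h]
  rw [linForm_smul_dvd_iff F hb0, ← X_zero_eq_linForm]

lemma isRelPrime_discForm (h2 : (2 : K) ≠ 0) {c k c' k' : K} (h : (c, k) ≠ (c', k')) :
    IsRelPrime (discForm F c k) (discForm F c' k') := by
  rcases eq_or_ne c c' with rfl | hc
  · refine isRelPrime_linForm F (i := 0) (j := 2) ?_
    simpa using h
  · refine isRelPrime_linForm F (i := 1) (j := 2) ?_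
    simpa [h2] using hc

lemma isRelPrime_slopeForm {c c' : K} (h : c ≠ c') :
    IsRelPrime (slopeForm F c) (slopeForm F c') :=
  isRelPrime_linForm F (i := 0) (j := 1) (by simpa using h)

lemma isRelPrime_slopeForm_discForm (c c' k : K) :
    IsRelPrime (slopeForm F c) (discForm F c' k) :=
  isRelPrime_linForm F (i := 1) (j := 2) (by simp)

lemma isRelPrime_X_zero_discForm (c k : K) : IsRelPrime (X 0) (discForm F c k) := by
  rw [X_zero_eq_linForm F (K := K)]
  exact isRelPrime_linForm F (i := 0) (j := 2) (by simp)

variable (F) [Fintype K]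

/-- The product of the polynomials `γ_k` over `k ∈ S`. -/
noncomputable def discProd (S : Finset K) : MvPolynomial (Fin 3) F := ∏ k ∈ S, ∏ c, discForm F c k

variable (K)

/-- The invariant `J`: the product of the linear forms over `K` of discriminant zero, one for each
line. -/
noncomputable def isotropicProd : MvPolynomial (Fin 3) F := X 0 * discProd F {(0 : K)}

/-- The invariant `Γ`: the product of the linear forms over `K` of nonsquare discriminant, one for
each line. -/
noncomputable def nonsplitProd : MvPolynomial (Fin 3) F := discProd F (nonSquares K)

/-- The invariant `B`: the product of the linear forms over `K` of nonzero square discriminant, one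
for each line. -/
noncomputable def splitProd : MvPolynomial (Fin 3) F :=
  (∏ c : K, slopeForm F c) * discProd F (nonzeroSquares K)

variable {F K}

lemma discForm_dvd_discProd {S : Finset K} {k : K} (hk : k ∈ S) (c : K) :
    discForm F c k ∣ discProd F S :=
  (Finset.dvd_prod_of_mem (discForm F · k) (Finset.mem_univ c)).trans
    (Finset.dvd_prod_of_mem (fun k ↦ ∏ c, discForm F c k) hk)

lemma linForm_dvd_isotropicProd (h2 : (2 : K) ≠ 0) {b : Fin 3 → K} (hb : b ≠ 0)
    (hD : dualDiscr b = 0) : linForm F b ∣ isotropicProd F K := by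
  rcases ne_or_eq (b 2) 0 with hb2 | hb2
  · rw [linForm_dvd_iff_discForm_dvd h2 hb2, hD, zero_div]
    exact (discForm_dvd_discProd (Finset.mem_singleton_self 0) _).mul_left _
  · have hb1 : b 1 = 0 := by simpa [dualDiscr, hb2] using hD
    have hb0 : b 0 ≠ 0 := fun hb0 ↦ hb (by ext i; fin_cases i <;> assumption)
    exact (linForm_dvd_iff_X_zero_dvd hb2 hb1 hb0).2 (dvd_mul_right _ _)

lemma linForm_dvd_nonsplitProd (h2 : (2 : K) ≠ 0) {b : Fin 3 → K}
    (hD : ¬ IsSquare (dualDiscr b)) : linForm F b ∣ nonsplitProd F K := by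
  have hb2 : b 2 ≠ 0 := by
    intro hb2
    exact hD ⟨b 1, by simp [dualDiscr, hb2, pow_two]⟩
  rw [linForm_dvd_iff_discForm_dvd h2 hb2]
  refine discForm_dvd_discProd (mem_nonSquares.2 fun hsq ↦ hD ?_) _
  have := hsq.mul (IsSquare.sq (2 * b 2))
  rwa [div_mul_cancel₀ _ (pow_ne_zero 2 (mul_ne_zero h2 hb2))] at this

lemma linForm_dvd_splitProd (h2 : (2 : K) ≠ 0) {b : Fin 3 → K} (hD0 : dualDiscr b ≠ 0)
    (hD : IsSquare (dualDiscr b)) : linForm F b ∣ splitProd F K := by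
  rcases ne_or_eq (b 2) 0 with hb2 | hb2
  · rw [linForm_dvd_iff_discForm_dvd h2 hb2]
    refine (discForm_dvd_discProd (mem_nonzeroSquares.2 ⟨?_, hD.div (IsSquare.sq _)⟩) _).mul_left _
    exact div_ne_zero hD0 (pow_ne_zero 2 (mul_ne_zero h2 hb2))
  · have hb1 : b 1 ≠ 0 := by
      intro hb1
      simp [dualDiscr, hb2, hb1] at hD0
    rw [linForm_dvd_iff_slopeForm_dvd hb2 hb1]
    exact (Finset.dvd_prod_of_mem _ (Finset.mem_univ _)).mul_right _

lemma discProd_dvd (h2 : (2 : K) ≠ 0) {S : Finset K} {f : MvPolynomial (Fin 3) F}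
    (hf : ∀ c, ∀ k ∈ S, discForm F c k ∣ f) : discProd F S ∣ f := by
  refine Finset.prod_dvd_of_isRelPrime (fun k _ k' _ hkk' ↦ ?_) fun k hk ↦
    Finset.prod_dvd_of_isRelPrime (fun c _ c' _ hcc' ↦ ?_) fun c _ ↦ hf c k hk
  · exact IsRelPrime.prod_left fun c _ ↦ IsRelPrime.prod_right fun c' _ ↦
      isRelPrime_discForm h2 (by simp [hkk'])
  · exact isRelPrime_discForm h2 (by simp [hcc'])

lemma isotropicProd_dvd (h2 : (2 : K) ≠ 0) {f : MvPolynomial (Fin 3) F} (h0 : X 0 ∣ f)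
    (hf : ∀ c : K, discForm F c 0 ∣ f) : isotropicProd F K ∣ f := by
  refine IsRelPrime.mul_dvd (IsRelPrime.prod_right fun k _ ↦ IsRelPrime.prod_right fun c _ ↦
    isRelPrime_X_zero_discForm c k) h0 (discProd_dvd h2 ?_)
  simpa using hf

lemma splitProd_dvd (h2 : (2 : K) ≠ 0) {f : MvPolynomial (Fin 3) F}
    (hslope : ∀ c : K, slopeForm F c ∣ f)
    (hdisc : ∀ c, ∀ k ∈ nonzeroSquares K, discForm F c k ∣ f) : splitProd F K ∣ f := by
  refine IsRelPrime.mul_dvd (IsRelPrime.prod_left fun c _ ↦ IsRelPrime.prod_right fun k _ ↦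
    IsRelPrime.prod_right fun c' _ ↦ isRelPrime_slopeForm_discForm c c' k)
    (Finset.prod_dvd_of_isRelPrime (fun c _ c' _ hcc' ↦ isRelPrime_slopeForm hcc')
      fun c _ ↦ hslope c) (discProd_dvd h2 hdisc)

lemma discProd_ne_zero (S : Finset K) : discProd F S ≠ 0 :=
  Finset.prod_ne_zero_iff.2 fun _ _ ↦ Finset.prod_ne_zero_iff.2 fun _ _ ↦
    linForm_ne_zero F fun h ↦ one_ne_zero (congrFun h 2)

lemma isotropicProd_ne_zero : isotropicProd F K ≠ 0 :=
  mul_ne_zero (X_ne_zero 0) (discProd_ne_zero _)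

lemma splitProd_ne_zero : splitProd F K ≠ 0 :=
  mul_ne_zero (Finset.prod_ne_zero_iff.2 fun _ _ ↦
    linForm_ne_zero F fun h ↦ one_ne_zero (congrFun h 1)) (discProd_ne_zero _)

lemma isHomogeneous_discProd (S : Finset K) :
    (discProd F S).IsHomogeneous (S.card * Fintype.card K) := by
  rw [← smul_eq_mul, ← Finset.sum_const]
  refine IsHomogeneous.prod _ _ _ fun k _ ↦ ?_
  rw [Fintype.card_eq_sum_ones]
  exact IsHomogeneous.prod _ _ _ fun c _ ↦ isHomogeneous_linForm F _

lemma totalDegree_isotropicProd_pos : 0 < (isotropicProd F K).totalDegree :=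
  (Nat.add_pos_left one_pos _).trans_eq (((isHomogeneous_X F 0).mul
    (isHomogeneous_discProd _)).totalDegree isotropicProd_ne_zero).symm

end FormProducts

section Action

variable {F K : Type*} [Field F] [Field K] [Algebra K F]

variable (F) in
/-- The reflection `a1 ↦ -a1`, which normalizes `SL₂` and preserves `Δ`. -/
noncomputable abbrev flipHom : MvPolynomial (Fin 3) F →ₐ[F] MvPolynomial (Fin 3) F :=
  diagHom ![1, -1, 1]

variable (F) in
/-- Restriction of polynomial functions to the plane `a0 = 0`. -/
noncomputable abbrev planeHom : MvPolynomial (Fin 3) F →ₐ[F] MvPolynomial (Fin 3) F :=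
  diagHom ![0, 1, 1]

/-- The action of the diagonal matrix with entries `t`, `t⁻¹`. -/
noncomputable abbrev torusHom (t : F) : MvPolynomial (Fin 3) F →ₐ[F] MvPolynomial (Fin 3) F :=
  diagHom ![t ^ 2, 1, (t ^ 2)⁻¹]

@[simp] lemma σP_X_zero (c : F) : σP F c (X 0) = X 0 := by simp [σP]

@[simp] lemma σP_X_one (c : F) : σP F c (X 1) = X 1 + C c * X 0 := by simp [σP]

@[simp] lemma σP_X_two (c : F) :
    σP F c (X 2) = X 2 + C (2 * c) * X 1 + C (c ^ 2) * X 0 := by simp [σP]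

lemma σP_C (c a : F) : σP F c (C a) = C a := (σP F c).commutes a

@[simp] lemma τA_X_zero : τA F (X 0) = X 2 := by simp [τA]

@[simp] lemma τA_X_one : τA F (X 1) = -X 1 := by simp [τA]

@[simp] lemma τA_X_two : τA F (X 2) = X 0 := by simp [τA]

lemma τA_C (a : F) : τA F (C a) = C a := (τA F).commutes a

lemma τA_τA (f : MvPolynomial (Fin 3) F) : τA F (τA F f) = f := by
  have h : (τA F).comp (τA F) = AlgHom.id F _ := by
    ext1 i
    fin_cases i <;> simp
  exact DFunLike.congr_fun h f

lemma σP_τA_braid (f : MvPolynomial (Fin 3) F) :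
    σP F 1 (τA F (σP F 1 (τA F (σP F 1 f)))) = τA F f := by
  have h : (σP F 1).comp ((τA F).comp ((σP F 1).comp ((τA F).comp (σP F 1)))) = τA F := by
    ext1 i
    fin_cases i <;>
      simp [map_ofNat C, map_ofNat (σP F 1), map_ofNat (τA F)] <;>
      ring
  exact DFunLike.congr_fun h f

lemma torusHom_eq_word {t : F} (ht : t ≠ 0) (f : MvPolynomial (Fin 3) F) :
    torusHom t f = τA F (σP F t⁻¹ (τA F (σP F t (τA F (σP F t⁻¹ f))))) := by
  have hinv : (C t * C t⁻¹ : MvPolynomial (Fin 3) F) = 1 := by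
    rw [← C_mul, mul_inv_cancel₀ ht, C_1]
  have h : torusHom t = (τA F).comp ((σP F t⁻¹).comp ((τA F).comp ((σP F t).comp
      ((τA F).comp (σP F t⁻¹))))) := by
    ext1 i
    fin_cases i <;>
      simp only [Fin.zero_eta, Fin.mk_one, Fin.reduceFinMk, AlgHom.comp_apply, diagHom_X, σP_X_zero,
        σP_X_one, σP_X_two, σP_C, τA_X_zero, τA_X_one, τA_X_two, τA_C, map_add, map_mul, map_neg,
        map_pow, two_mul, add_mul, Matrix.cons_val, ← inv_pow, C_1] <;>
      grind
  exact DFunLike.congr_fun h f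

lemma flipHom_flipHom (f : MvPolynomial (Fin 3) F) : flipHom F (flipHom F f) = f := by
  rw [diagHom_diagHom]
  convert diagHom_one f
  ext i
  fin_cases i <;> simp

lemma flipHom_σP (c : F) (f : MvPolynomial (Fin 3) F) :
    flipHom F (σP F c f) = σP F (-c) (flipHom F f) := by
  have h : (flipHom F).comp (σP F c) = (σP F (-c)).comp (flipHom F) := by
    ext1 i
    fin_cases i <;>
      simp only [Fin.zero_eta, Fin.mk_one, Fin.reduceFinMk, AlgHom.comp_apply, diagHom_X, diagHom_C,
        σP_X_zero, σP_X_one, σP_X_two, map_add, map_mul, map_neg, map_pow, map_one,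
        Matrix.cons_val] <;>
      ring
  exact DFunLike.congr_fun h f

lemma flipHom_τA (f : MvPolynomial (Fin 3) F) : flipHom F (τA F f) = τA F (flipHom F f) := by
  have h : (flipHom F).comp (τA F) = (τA F).comp (flipHom F) := by
    ext1 i
    fin_cases i <;> simp
  exact DFunLike.congr_fun h f

lemma planeHom_planeHom (f : MvPolynomial (Fin 3) F) :
    planeHom F (planeHom F f) = planeHom F f := by
  rw [diagHom_diagHom]
  congr 1
  ext i
  fin_cases i <;> simp

lemma diagHom_planeHom (a : Fin 3 → F) (f : MvPolynomial (Fin 3) F) :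
    diagHom a (planeHom F f) = planeHom F (diagHom a f) := by
  rw [diagHom_diagHom, diagHom_diagHom, mul_comm]

lemma planeHom_σP_planeHom (c : F) (f : MvPolynomial (Fin 3) F) :
    planeHom F (σP F c (planeHom F f)) = planeHom F (σP F c f) := by
  have h : (planeHom F).comp ((σP F c).comp (planeHom F)) = (planeHom F).comp (σP F c) := by
    ext1 i
    fin_cases i <;> simp
  exact DFunLike.congr_fun h f

-- If `τ P = u P`, applying the braid relation to `P` gives `u² = u`.
lemma τA_eq_self_of_dvd {P : MvPolynomial (Fin 3) F} (hP : P ≠ 0) (hσ : σP F 1 P = P)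
    (hdvd : P ∣ τA F P) : τA F P = P := by
  obtain ⟨g, hg⟩ := hdvd
  have hunit : g * τA F g = 1 := by
    have := τA_τA P
    rw [hg, map_mul, hg, mul_assoc] at this
    exact mul_left_cancel₀ hP (this.trans (mul_one P).symm)
  obtain ⟨u, hu, rfl⟩ := isUnit_iff_eq_C_of_isReduced.1 (IsUnit.of_mul_eq_one _ hunit)
  have hbraid := σP_τA_braid P
  simp only [hσ, hg, map_mul, σP_C, τA_C, mul_assoc] at hbraid
  have hidem : (C u * C u : MvPolynomial (Fin 3) F) = C u := mul_left_cancel₀ hP hbraid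
  have hone : (C u : MvPolynomial (Fin 3) F) = 1 :=
    mul_left_cancel₀ (by simpa using hu.ne_zero) (hidem.trans (mul_one _).symm)
  rw [hg, hone, mul_one]

lemma σP_discForm (b c k : K) :
    σP F (algebraMap K F b) (discForm F c k) = discForm F (c + b) k := by
  simp only [discForm_eq, map_add, map_mul, map_sub, map_pow, σP_X_zero, σP_X_one, σP_X_two, σP_C,
    map_ofNat C, map_ofNat (σP F (algebraMap K F b))]
  ring

lemma σP_slopeForm (b c : K) :
    σP F (algebraMap K F b) (slopeForm F c) = slopeForm F (c + b) := by
  simp only [slopeForm_eq, map_add, map_mul, σP_X_zero, σP_X_one, σP_C]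
  ring

lemma flipHom_discForm (c k : K) : flipHom F (discForm F c k) = discForm F (-c) k := by
  simp [discForm_eq]

lemma flipHom_slopeForm (c : K) : flipHom F (slopeForm F c) = -slopeForm F (-c) := by
  simp only [slopeForm_eq, map_add, map_mul, map_neg, diagHom_X, diagHom_C, Matrix.cons_val, C_1]
  ring

lemma planeHom_discForm (c k : K) : planeHom F (discForm F c k) = linForm F ![0, 2 * c, 1] := by
  simp [discForm_eq, linForm, Fin.sum_univ_three, two_mul, add_comm]

lemma planeHom_slopeForm (c : K) : planeHom F (slopeForm F c) = X 1 := by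
  simp [slopeForm_eq]

lemma linForm_dvd_τA {b : Fin 3 → K} {P : MvPolynomial (Fin 3) F}
    (h : linForm F ![b 2, -b 1, b 0] ∣ P) : linForm F b ∣ τA F P := by
  have hτ : τA F (linForm F ![b 2, -b 1, b 0]) = linForm F b := by
    simp only [linForm, Fin.sum_univ_three, Matrix.cons_val, map_add, map_mul, map_neg, τA_X_zero,
      τA_X_one, τA_X_two, τA_C]
    ring
  rw [← hτ]
  exact map_dvd _ h

lemma dualDiscr_reverse (b : Fin 3 → K) : dualDiscr ![b 2, -b 1, b 0] = dualDiscr b := by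
  simp only [dualDiscr, Matrix.cons_val]
  ring

lemma dualDiscr_discForm (c k : K) : dualDiscr ![c ^ 2 - k, 2 * c, 1] = 2 ^ 2 * k := by
  simp only [dualDiscr, Matrix.cons_val]
  ring

section Products

variable [Fintype K]

lemma σP_discProd (b : K) (S : Finset K) :
    σP F (algebraMap K F b) (discProd F S) = discProd F S := by
  simp only [discProd, map_prod, σP_discForm]
  exact Finset.prod_congr rfl fun k _ ↦ Equiv.prod_comp (Equiv.addRight b) (discForm F · k)

lemma σP_isotropicProd (b : K) :
    σP F (algebraMap K F b) (isotropicProd F K) = isotropicProd F K := by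
  rw [isotropicProd, map_mul, σP_X_zero, σP_discProd]

lemma σP_splitProd (b : K) : σP F (algebraMap K F b) (splitProd F K) = splitProd F K := by
  rw [splitProd, map_mul, σP_discProd, map_prod]
  simp only [σP_slopeForm]
  rw [← Equiv.prod_comp (Equiv.addRight b) (slopeForm F)]
  rfl

lemma flipHom_discProd (S : Finset K) : flipHom F (discProd F S) = discProd F S := by
  simp only [discProd, map_prod, flipHom_discForm]
  exact Finset.prod_congr rfl fun k _ ↦ Equiv.prod_comp (Equiv.neg K) (discForm F · k)

lemma flipHom_splitProd (hK : ringChar K ≠ 2) : flipHom F (splitProd F K) = -splitProd F K := by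
  have hodd : Odd (Fintype.card K) := Nat.odd_iff.2 (FiniteField.odd_card_of_char_ne_two hK)
  rw [splitProd, map_mul, flipHom_discProd, map_prod]
  simp only [flipHom_slopeForm, Finset.prod_neg, Finset.card_univ, hodd.neg_one_pow]
  rw [← Equiv.prod_comp (Equiv.neg K) (slopeForm F)]
  simp

lemma τA_isotropicProd (h2 : (2 : K) ≠ 0) : τA F (isotropicProd F K) = isotropicProd F K := by
  have hdvd {b : Fin 3 → K} (hb : b ≠ 0) (hD : dualDiscr b = 0) :
      linForm F b ∣ τA F (isotropicProd F K) := by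
    refine linForm_dvd_τA (linForm_dvd_isotropicProd h2 (fun h ↦ hb ?_) (dualDiscr_reverse b ▸ hD))
    ext i
    fin_cases i
    exacts [congrFun h 2, neg_eq_zero.1 (congrFun h 1), congrFun h 0]
  refine τA_eq_self_of_dvd isotropicProd_ne_zero (by simpa using σP_isotropicProd (F := F) (1 : K))
    (isotropicProd_dvd h2 ?_ fun c ↦ hdvd (fun h ↦ one_ne_zero (congrFun h 2)) ?_)
  · rw [X_zero_eq_linForm F (K := K)]
    exact hdvd (fun h ↦ one_ne_zero (congrFun h 0)) (by simp [dualDiscr])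
  · rw [dualDiscr_discForm, mul_zero]

lemma τA_nonsplitProd (h2 : (2 : K) ≠ 0) : τA F (nonsplitProd F K) = nonsplitProd F K := by
  rw [nonsplitProd]
  refine τA_eq_self_of_dvd (discProd_ne_zero _)
    (by simpa using σP_discProd (F := F) (1 : K) (nonSquares K))
    (discProd_dvd h2 fun c k hk ↦ linForm_dvd_τA (linForm_dvd_nonsplitProd h2 fun hsq ↦ ?_))
  rw [dualDiscr_reverse, dualDiscr_discForm] at hsq
  refine mem_nonSquares.1 hk ?_
  simpa [h2] using hsq.div (IsSquare.sq 2)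

lemma τA_splitProd (h2 : (2 : K) ≠ 0) : τA F (splitProd F K) = splitProd F K := by
  have hdvd {b : Fin 3 → K} (hD0 : dualDiscr b ≠ 0) (hD : IsSquare (dualDiscr b)) :
      linForm F b ∣ τA F (splitProd F K) :=
    linForm_dvd_τA (linForm_dvd_splitProd h2 (by rwa [dualDiscr_reverse])
      (by rwa [dualDiscr_reverse]))
  refine τA_eq_self_of_dvd splitProd_ne_zero (by simpa using σP_splitProd (F := F) (1 : K))
    (splitProd_dvd h2 (fun c ↦ hdvd ?_ ?_) fun c k hk ↦ ?_)
  · simp [dualDiscr]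
  · simp [dualDiscr]
  · obtain ⟨hk0, hsq⟩ := mem_nonzeroSquares.1 hk
    refine hdvd ?_ ?_ <;> rw [dualDiscr_discForm]
    · exact mul_ne_zero (pow_ne_zero 2 h2) hk0
    · exact (IsSquare.sq 2).mul hsq

end Products

end Action

section Invariants

variable (F K : Type*) [Field F] [Field K] [Algebra K F]

/-- The ring of invariants of `SL₂(K)`. -/
noncomputable def sl2Invariants : Subalgebra F (MvPolynomial (Fin 3) F) :=
  fixedSubalgebra (insert (τA F) (Set.range fun c : K ↦ σP F (algebraMap K F c)))

/-- The invariants of `SL₂(K)` that are also fixed by the reflection `flipHom`, that is, the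
invariants of an orthogonal group of `Δ`. -/
noncomputable def evenInvariants : Subalgebra F (MvPolynomial (Fin 3) F) :=
  sl2Invariants F K ⊓ fixedSubalgebra {flipHom F}

/-- The polynomials in `a1`, `a2` with the symmetries that restrictions of elements of
`evenInvariants` to the plane `a0 = 0` inherit. -/
noncomputable def planeInvariants : Subalgebra F (MvPolynomial (Fin 3) F) :=
  fixedSubalgebra ({planeHom F, flipHom F} ∪
    ((Set.range fun c : K ↦ (planeHom F).comp (σP F (algebraMap K F c))) ∪
      Set.range fun t : Kˣ ↦ torusHom (algebraMap K F t)))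

variable {F K} {f : MvPolynomial (Fin 3) F}

lemma mem_sl2Invariants :
    f ∈ sl2Invariants F K ↔ τA F f = f ∧ ∀ c : K, σP F (algebraMap K F c) f = f := by
  simp [sl2Invariants, mem_fixedSubalgebra]

lemma mem_evenInvariants : f ∈ evenInvariants F K ↔ f ∈ sl2Invariants F K ∧ flipHom F f = f := by
  simp [evenInvariants, mem_fixedSubalgebra]

lemma mem_planeInvariants : f ∈ planeInvariants F K ↔
    (planeHom F f = f ∧ flipHom F f = f) ∧ (∀ c : K, planeHom F (σP F (algebraMap K F c) f) = f) ∧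
      ∀ t : Kˣ, torusHom (algebraMap K F t) f = f := by
  simp [planeInvariants, mem_fixedSubalgebra, or_imp, forall_and]

lemma mem_evenInvariants_of_mul_mem {P g : MvPolynomial (Fin 3) F} (hP0 : P ≠ 0)
    (hP : P ∈ evenInvariants F K) (h : P * g ∈ evenInvariants F K) : g ∈ evenInvariants F K :=
  ⟨mem_fixedSubalgebra_of_mul_mem hP0 hP.1 h.1, mem_fixedSubalgebra_of_mul_mem hP0 hP.2 h.2⟩

lemma flipHom_mem_sl2Invariants (hf : f ∈ sl2Invariants F K) :
    flipHom F f ∈ sl2Invariants F K := by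
  rw [mem_sl2Invariants] at *
  refine ⟨by rw [← flipHom_τA, hf.1], fun c ↦ ?_⟩
  have h := flipHom_σP (algebraMap K F (-c)) f
  rw [hf.2, map_neg, neg_neg] at h
  exact h.symm

lemma planeHom_mem_planeInvariants (hf : f ∈ evenInvariants F K) :
    planeHom F f ∈ planeInvariants F K := by
  obtain ⟨hsl2, hflip⟩ := mem_evenInvariants.1 hf
  obtain ⟨hτ, hσ⟩ := mem_sl2Invariants.1 hsl2
  refine mem_planeInvariants.2 ⟨⟨planeHom_planeHom f, by rw [diagHom_planeHom, hflip]⟩,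
    fun c ↦ by rw [planeHom_σP_planeHom, hσ], fun t ↦ ?_⟩
  have ht : algebraMap K F t ≠ 0 := (map_ne_zero _).2 t.ne_zero
  rw [diagHom_planeHom, torusHom_eq_word ht, ← map_inv₀]
  simp only [hτ, hσ]

variable (F)

/-- The invariant `Δ`. -/
noncomputable def disc : MvPolynomial (Fin 3) F := X 1 ^ 2 - X 0 * X 2

variable (K)

lemma disc_mem_evenInvariants : disc F ∈ evenInvariants F K := by
  rw [mem_evenInvariants, mem_sl2Invariants]
  refine ⟨⟨?_, fun c ↦ ?_⟩, ?_⟩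
  · simp [disc, mul_comm]
  · simp only [disc, map_sub, map_mul, map_pow, σP_X_zero, σP_X_one, σP_X_two, map_ofNat C]
    ring
  · simp [disc]

lemma planeHom_disc : planeHom F (disc F) = X 1 ^ 2 := by simp [disc]

lemma isHomogeneous_disc : (disc F).IsHomogeneous 2 :=
  ((isHomogeneous_X F 1).pow 2).sub ((isHomogeneous_X F 0).mul (isHomogeneous_X F 2))

variable {K} [Fintype K]

lemma isotropicProd_mem_evenInvariants (h2 : (2 : K) ≠ 0) :
    isotropicProd F K ∈ evenInvariants F K := by
  rw [mem_evenInvariants, mem_sl2Invariants]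
  refine ⟨⟨τA_isotropicProd h2, σP_isotropicProd⟩, ?_⟩
  rw [isotropicProd, map_mul, flipHom_discProd]
  simp

lemma nonsplitProd_mem_evenInvariants (h2 : (2 : K) ≠ 0) :
    nonsplitProd F K ∈ evenInvariants F K :=
  mem_evenInvariants.2 ⟨mem_sl2Invariants.2 ⟨τA_nonsplitProd h2, (σP_discProd · _)⟩,
    flipHom_discProd _⟩

lemma splitProd_mem_sl2Invariants (h2 : (2 : K) ≠ 0) : splitProd F K ∈ sl2Invariants F K :=
  mem_sl2Invariants.2 ⟨τA_splitProd h2, σP_splitProd⟩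

lemma splitProd_sq_mem_evenInvariants (hK : ringChar K ≠ 2) :
    splitProd F K ^ 2 ∈ evenInvariants F K :=
  mem_evenInvariants.2 ⟨pow_mem (splitProd_mem_sl2Invariants F (Ring.two_ne_zero hK)) 2,
    by rw [map_pow, flipHom_splitProd hK, neg_sq]⟩

end Invariants

section PlaneInvariants

variable {F K : Type*} [Field F] [Field K] [Algebra K F] {h : MvPolynomial (Fin 3) F}
  {m : Fin 3 →₀ ℕ}

lemma apply_zero_eq_zero_of_mem_support (hh : h ∈ planeInvariants F K) (hm : m ∈ h.support) :
    m 0 = 0 := by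
  have h1 := prod_pow_eq_one_of_mem_support (mem_planeInvariants.1 hh).1.1 hm
  rw [Finsupp.prod_fintype _ _ fun _ ↦ pow_zero _, Fin.prod_univ_three] at h1
  by_contra h0
  simp [h0] at h1

lemma even_apply_one_of_mem_support (h2 : (2 : K) ≠ 0) (hh : h ∈ planeInvariants F K)
    (hm : m ∈ h.support) : Even (m 1) := by
  have h1 := prod_pow_eq_one_of_mem_support (mem_planeInvariants.1 hh).1.2 hm
  rw [Finsupp.prod_fintype _ _ fun _ ↦ pow_zero _, Fin.prod_univ_three] at h1
  by_contra hodd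
  rw [Nat.not_even_iff_odd] at hodd
  simp only [Matrix.cons_val, one_pow, one_mul, mul_one, hodd.neg_one_pow] at h1
  refine h2 ((algebraMap K F).injective ?_)
  rw [map_ofNat, map_zero]
  linear_combination -h1

lemma card_nonSquares_dvd_of_mem_support [Fintype K] (hK : ringChar K ≠ 2)
    (hh : h ∈ planeInvariants F K) (hm : m ∈ h.support) : (nonSquares K).card ∣ m 2 := by
  have h1 (t : Kˣ) : t ^ (2 * m 2) = 1 := by
    have h1 := prod_pow_eq_one_of_mem_support ((mem_planeInvariants.1 hh).2.2 t) hm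
    rw [Finsupp.prod_fintype _ _ fun _ ↦ pow_zero _, Fin.prod_univ_three,
      apply_zero_eq_zero_of_mem_support hh hm] at h1
    ext
    apply (algebraMap K F).injective
    simpa [pow_mul] using h1
  rw [FiniteField.forall_pow_eq_one_iff, ← card_nonSquares_add_self hK, ← two_mul] at h1
  exact Nat.dvd_of_mul_dvd_mul_left two_pos h1

/-- The part of `h` of degree zero in `X 2`, with `X 1 ^ 2` replaced by `Δ`. -/
noncomputable def discLift (h : MvPolynomial (Fin 3) F) : MvPolynomial (Fin 3) F :=
  ∑ m ∈ h.support with m 2 = 0, C (coeff m h) * disc F ^ (m 1 / 2)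

lemma discLift_mem_adjoin (h : MvPolynomial (Fin 3) F) :
    discLift h ∈ Algebra.adjoin F {disc F} :=
  sum_mem fun _ _ ↦ mul_mem (Subalgebra.algebraMap_mem _ _)
    (pow_mem (Algebra.self_mem_adjoin_singleton F _) _)

lemma totalDegree_discLift_le (h : MvPolynomial (Fin 3) F) :
    (discLift h).totalDegree ≤ h.totalDegree := by
  refine totalDegree_finsetSum_le fun m hm ↦ (totalDegree_mul _ _).trans ?_
  rw [totalDegree_C, zero_add]
  calc (disc F ^ (m 1 / 2)).totalDegree ≤ 2 * (m 1 / 2) :=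
        ((isHomogeneous_disc F).pow _).totalDegree_le
    _ ≤ m 1 := Nat.mul_div_le _ _
    _ ≤ m.degree := Finsupp.le_degree 1 m
    _ ≤ h.totalDegree := le_totalDegree (Finset.mem_of_mem_filter m hm)

lemma X_two_pow_dvd_sub_planeHom_discLift [Fintype K] (hK : ringChar K ≠ 2)
    (hh : h ∈ planeInvariants F K) :
    X 2 ^ (nonSquares K).card ∣ h - planeHom F (discLift h) := by
  have hlift : planeHom F (discLift h) = ∑ m ∈ h.support with m 2 = 0, monomial m (coeff m h) := by
    rw [discLift, map_sum]
    refine Finset.sum_congr rfl fun m hm ↦ ?_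
    obtain ⟨hm, hm2⟩ := Finset.mem_filter.1 hm
    rw [map_mul, map_pow, planeHom_disc, diagHom_C, ← pow_mul,
      Nat.mul_div_cancel' (even_apply_one_of_mem_support (Ring.two_ne_zero hK) hh hm).two_dvd,
      monomial_eq, Finsupp.prod_fintype _ _ fun _ ↦ pow_zero _, Fin.prod_univ_three, hm2,
      apply_zero_eq_zero_of_mem_support hh hm]
    simp
  have hsub : h - planeHom F (discLift h) =
      ∑ m ∈ h.support with m 2 ≠ 0, monomial m (coeff m h) := by
    rw [hlift]
    refine sub_eq_of_eq_add' ?_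
    rw [Finset.sum_filter_add_sum_filter_not]
    exact h.as_sum
  rw [hsub]
  refine Finset.dvd_sum fun m hm ↦ ?_
  obtain ⟨hm, hm2⟩ := Finset.mem_filter.1 hm
  rw [X_pow_eq_monomial, monomial_dvd_monomial]
  exact ⟨Or.inr (Finsupp.single_le_iff.2 (Nat.le_of_dvd (Nat.pos_of_ne_zero hm2)
    (card_nonSquares_dvd_of_mem_support hK hh hm))), one_dvd _⟩

section Lift

variable [Fintype K]

lemma planeHom_discProd (S : Finset K) :
    planeHom F (discProd F S) = ∏ c : K, linForm F ![0, 2 * c, 1] ^ S.card := by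
  simp only [discProd, map_prod, planeHom_discForm, Finset.prod_const, Finset.prod_pow]

lemma planeHom_nonsplitProd_dvd (h2 : (2 : K) ≠ 0) {g : MvPolynomial (Fin 3) F}
    (hg : ∀ c : K, planeHom F (σP F (algebraMap K F c) g) = g)
    (hdvd : X 2 ^ (nonSquares K).card ∣ g) : planeHom F (nonsplitProd F K) ∣ g := by
  rw [nonsplitProd, planeHom_discProd]
  refine Finset.prod_dvd_of_isRelPrime (fun c _ c' _ hcc' ↦ ?_) fun c _ ↦ ?_
  · exact (isRelPrime_linForm F (i := 1) (j := 2) (by simpa [h2] using hcc')).pow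
  · have hX : planeHom F (σP F (algebraMap K F c) (X 2)) = linForm F ![0, 2 * c, 1] := by
      simp [linForm, Fin.sum_univ_three, add_comm, map_ofNat (algebraMap K F)]
    have := map_dvd ((planeHom F).comp (σP F (algebraMap K F c))) hdvd
    rwa [map_pow, AlgHom.comp_apply, AlgHom.comp_apply, hX, hg] at this

lemma planeHom_nonsplitProd_ne_zero : planeHom F (nonsplitProd F K) ≠ 0 := by
  rw [nonsplitProd, planeHom_discProd]
  exact Finset.prod_ne_zero_iff.2 fun c _ ↦
    pow_ne_zero _ (linForm_ne_zero F fun h ↦ one_ne_zero (congrFun h 2))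

lemma totalDegree_planeHom_nonsplitProd :
    (planeHom F (nonsplitProd F K)).totalDegree = (nonSquares K).card * Fintype.card K :=
  (isHomogeneous_diagHom _ (isHomogeneous_discProd _)).totalDegree planeHom_nonsplitProd_ne_zero

lemma exists_planeHom_eq (hK : ringChar K ≠ 2) (hh : h ∈ planeInvariants F K) :
    ∃ f ∈ Algebra.adjoin F {disc F, nonsplitProd F K},
      f.totalDegree ≤ h.totalDegree ∧ planeHom F f = h := by
  have h2 : (2 : K) ≠ 0 := Ring.two_ne_zero hK
  refine exists_lift (P := nonsplitProd F K) (T := (planeInvariants F K : Set _))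
    (totalDegree_diagHom_le _)
    (Algebra.subset_adjoin (by simp))
    ((isHomogeneous_discProd _).totalDegree_le.trans totalDegree_planeHom_nonsplitProd.ge)
    ?_ (fun h hh ↦ ?_) hh
  · obtain ⟨k, hk⟩ := FiniteField.exists_nonsquare hK
    rw [totalDegree_planeHom_nonsplitProd]
    exact Nat.mul_pos (Finset.card_pos.2 ⟨k, mem_nonSquares.2 hk⟩) Fintype.card_pos
  have hlift : discLift h ∈ evenInvariants F K :=
    Algebra.adjoin_le (by simpa using disc_mem_evenInvariants F K) (discLift_mem_adjoin h)
  have hsub := sub_mem hh (planeHom_mem_planeInvariants hlift)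
  obtain ⟨g, hg⟩ := planeHom_nonsplitProd_dvd h2 (mem_planeInvariants.1 hsub).2.1
    (X_two_pow_dvd_sub_planeHom_discLift hK hh)
  refine ⟨discLift h, Algebra.adjoin_mono (by simp) (discLift_mem_adjoin h),
    totalDegree_discLift_le h, g, ?_, by rw [← hg, add_sub_cancel]⟩
  rw [hg] at hsub
  exact mem_fixedSubalgebra_of_mul_mem planeHom_nonsplitProd_ne_zero
    (planeHom_mem_planeInvariants (nonsplitProd_mem_evenInvariants F h2)) hsub

end Lift

end PlaneInvariants

section Generators

variable {F K : Type*} [Field F] [Field K] [Algebra K F] [Fintype K] {f : MvPolynomial (Fin 3) F}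

lemma isotropicProd_dvd_of_planeHom_eq_zero (h2 : (2 : K) ≠ 0) (hf : f ∈ sl2Invariants F K)
    (h0 : planeHom F f = 0) : isotropicProd F K ∣ f := by
  obtain ⟨hτ, hσ⟩ := mem_sl2Invariants.1 hf
  have hX0 : X 0 ∣ f := by
    have hplane : ∀ j ≠ 0, (![0, 1, 1] : Fin 3 → F) j = 1 := by
      intro j hj
      fin_cases j <;> simp_all
    simpa only [h0, sub_zero] using X_dvd_sub_diagHom hplane f
  have hX2 : discForm F (0 : K) 0 ∣ f := by
    simpa [hτ, discForm_eq] using map_dvd (τA F) hX0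
  refine isotropicProd_dvd h2 hX0 fun c ↦ ?_
  simpa only [hσ, σP_discForm, zero_add] using map_dvd (σP F (algebraMap K F c)) hX2

lemma splitProd_dvd_of_flipHom_eq_neg (h2 : (2 : K) ≠ 0) (hf : f ∈ sl2Invariants F K)
    (hflip : flipHom F f = -f) : splitProd F K ∣ f := by
  obtain ⟨hτ, hσ⟩ := mem_sl2Invariants.1 hf
  have hX1 : slopeForm F (0 : K) ∣ f := by
    have hreflect : ∀ j ≠ 1, (![1, -1, 1] : Fin 3 → F) j = 1 := by
      intro j hj
      fin_cases j <;> simp_all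
    have htwo : f - flipHom F f = C (algebraMap K F 2) * f := by
      rw [hflip, map_ofNat, map_ofNat]
      ring
    have hdvd := X_dvd_sub_diagHom hreflect f
    rw [htwo, (((IsUnit.mk0 2 h2).map (algebraMap K F)).map C).dvd_mul_left] at hdvd
    simpa [slopeForm_eq] using hdvd
  have hslope (c : K) : slopeForm F c ∣ f := by
    simpa only [hσ, σP_slopeForm, zero_add] using map_dvd (σP F (algebraMap K F c)) hX1
  refine splitProd_dvd h2 hslope fun c k hk ↦ ?_
  obtain ⟨hk0, t, rfl⟩ := mem_nonzeroSquares.1 hk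
  have ht : discForm F t (t * t) ∣ f := by
    rw [← hτ]
    refine linForm_dvd_τA ((linForm_dvd_iff_slopeForm_dvd (by simp [pow_two]) ?_).2 (hslope _))
    simpa [h2] using hk0
  simpa only [hσ, σP_discForm, add_sub_cancel] using map_dvd (σP F (algebraMap K F (c - t))) ht

lemma adjoin_le_evenInvariants (h2 : (2 : K) ≠ 0) :
    Algebra.adjoin F {disc F, isotropicProd F K, nonsplitProd F K} ≤ evenInvariants F K := by
  refine Algebra.adjoin_le ?_
  rintro x (rfl | rfl | rfl)
  exacts [disc_mem_evenInvariants F K, isotropicProd_mem_evenInvariants F h2,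
    nonsplitProd_mem_evenInvariants F h2]

lemma exists_eq_add_isotropicProd_mul (hK : ringChar K ≠ 2) (hf : f ∈ evenInvariants F K) :
    ∃ f₀ ∈ Algebra.adjoin F {disc F, isotropicProd F K, nonsplitProd F K},
      f₀.totalDegree ≤ f.totalDegree ∧
        ∃ g ∈ evenInvariants F K, f = f₀ + isotropicProd F K * g := by
  have h2 : (2 : K) ≠ 0 := Ring.two_ne_zero hK
  obtain ⟨f₀, hf₀, hdeg, hplane⟩ := exists_planeHom_eq hK (planeHom_mem_planeInvariants hf)
  have hf₀' : f₀ ∈ Algebra.adjoin F {disc F, isotropicProd F K, nonsplitProd F K} :=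
    Algebra.adjoin_mono (Set.insert_subset_insert (Set.subset_insert _ _)) hf₀
  have hsub := sub_mem hf (adjoin_le_evenInvariants h2 hf₀')
  obtain ⟨g, hg⟩ := isotropicProd_dvd_of_planeHom_eq_zero h2 hsub.1
    (by rw [map_sub, hplane, sub_self])
  refine ⟨f₀, hf₀', hdeg.trans (totalDegree_diagHom_le _ f), g, ?_, sub_eq_iff_eq_add'.1 hg⟩
  exact mem_evenInvariants_of_mul_mem isotropicProd_ne_zero (isotropicProd_mem_evenInvariants F h2)
    (hg ▸ hsub)

lemma evenInvariants_eq_adjoin (hK : ringChar K ≠ 2) : evenInvariants F K =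
    Algebra.adjoin F {disc F, isotropicProd F K, nonsplitProd F K} := by
  refine le_antisymm (fun f hf ↦ ?_) (adjoin_le_evenInvariants (Ring.two_ne_zero hK))
  suffices hlift : ∃ f₀ ∈ Algebra.adjoin F {disc F, isotropicProd F K, nonsplitProd F K},
      f₀.totalDegree ≤ f.totalDegree ∧ AlgHom.id F _ f₀ = f by
    obtain ⟨f₀, hf₀, -, rfl⟩ := hlift
    exact hf₀
  exact exists_lift (P := isotropicProd F K) (T := (evenInvariants F K : Set _)) (fun _ ↦ le_rfl)
    (Algebra.subset_adjoin (by simp)) le_rfl totalDegree_isotropicProd_pos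
    (fun f hf ↦ exists_eq_add_isotropicProd_mul hK hf) hf

lemma evenInvariants_eq_range_aeval (hK : ringChar K ≠ 2) : evenInvariants F K =
    (aeval ![disc F, isotropicProd F K, nonsplitProd F K]).range := by
  rw [evenInvariants_eq_adjoin hK, ← Algebra.adjoin_range_eq_range_aeval]
  simp only [Matrix.range_cons, Matrix.range_empty, Set.union_empty, Set.insert_eq]

lemma exists_mem_evenInvariants_sub_flipHom_eq (hK : ringChar K ≠ 2)
    (hf : f ∈ sl2Invariants F K) :
    ∃ g ∈ evenInvariants F K, f - flipHom F f = splitProd F K * g := by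
  have h2 : (2 : K) ≠ 0 := Ring.two_ne_zero hK
  have hsub := sub_mem hf (flipHom_mem_sl2Invariants hf)
  have hodd : flipHom F (f - flipHom F f) = -(f - flipHom F f) := by
    rw [map_sub, flipHom_flipHom, neg_sub]
  obtain ⟨g, hg⟩ := splitProd_dvd_of_flipHom_eq_neg h2 hsub hodd
  refine ⟨g, mem_evenInvariants.2 ⟨mem_fixedSubalgebra_of_mul_mem splitProd_ne_zero
    (splitProd_mem_sl2Invariants F h2) (hg ▸ hsub), ?_⟩, hg⟩
  rw [hg, map_mul, flipHom_splitProd hK, neg_mul, neg_inj] at hodd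
  exact mul_left_cancel₀ splitProd_ne_zero hodd

theorem sl2Invariants_eq_adjoin (hK : ringChar K ≠ 2) : sl2Invariants F K =
    Algebra.adjoin F {disc F, isotropicProd F K, nonsplitProd F K, splitProd F K} := by
  have h2 : (2 : K) ≠ 0 := Ring.two_ne_zero hK
  have heven : evenInvariants F K ≤
      Algebra.adjoin F {disc F, isotropicProd F K, nonsplitProd F K, splitProd F K} := by
    rw [evenInvariants_eq_adjoin hK]
    exact Algebra.adjoin_mono (by gcongr; simp)
  refine le_antisymm (fun f hf ↦ ?_) (Algebra.adjoin_le ?_)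
  · have hsum : f + flipHom F f ∈ evenInvariants F K := mem_evenInvariants.2
      ⟨add_mem hf (flipHom_mem_sl2Invariants hf), by rw [map_add, flipHom_flipHom, add_comm]⟩
    obtain ⟨g, hg, hfg⟩ := exists_mem_evenInvariants_sub_flipHom_eq hK hf
    have hF : (2 : F) ≠ 0 := by
      rw [← map_ofNat (algebraMap K F)]
      exact (map_ne_zero _).2 h2
    have hdecomp : f = (2 : F)⁻¹ • ((f + flipHom F f) + splitProd F K * g) := by
      rw [← hfg, add_add_sub_cancel, ← two_smul F, inv_smul_smul₀ hF]
    rw [hdecomp]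
    exact Subalgebra.smul_mem _ (add_mem (heven hsum)
      (mul_mem (Algebra.subset_adjoin (by simp)) (heven hg))) _
  · rintro x (rfl | rfl | rfl | rfl)
    exacts [(disc_mem_evenInvariants F K).1, (isotropicProd_mem_evenInvariants F h2).1,
      (nonsplitProd_mem_evenInvariants F h2).1, splitProd_mem_sl2Invariants F h2]

theorem exists_splitProd_sq_eq (hK : ringChar K ≠ 2) : ∃ Φ : MvPolynomial (Fin 3) F,
    splitProd F K ^ 2 = disc F ^ Fintype.card K * nonsplitProd F K ^ 2 +
      isotropicProd F K * aeval ![disc F, isotropicProd F K, nonsplitProd F K] Φ := by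
  have h2 : (2 : K) ≠ 0 := Ring.two_ne_zero hK
  have hmem : splitProd F K ^ 2 - disc F ^ Fintype.card K * nonsplitProd F K ^ 2 ∈
      evenInvariants F K :=
    sub_mem (splitProd_sq_mem_evenInvariants F hK) (mul_mem
      (pow_mem (disc_mem_evenInvariants F K) _) (pow_mem (nonsplitProd_mem_evenInvariants F h2) 2))
  have hplane : planeHom F (splitProd F K ^ 2) =
      planeHom F (disc F ^ Fintype.card K * nonsplitProd F K ^ 2) := by
    simp only [splitProd, nonsplitProd, map_mul, map_pow, map_prod, planeHom_slopeForm,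
      planeHom_discProd, planeHom_disc, Finset.prod_const, Finset.card_univ,
      card_nonzeroSquares_eq hK]
    ring
  obtain ⟨g, hg⟩ := isotropicProd_dvd_of_planeHom_eq_zero h2 hmem.1
    (by rw [map_sub, hplane, sub_self])
  have hgmem : g ∈ evenInvariants F K := mem_evenInvariants_of_mul_mem isotropicProd_ne_zero
    (isotropicProd_mem_evenInvariants F h2) (hg ▸ hmem)
  obtain ⟨Φ, rfl⟩ := (evenInvariants_eq_range_aeval hK).le hgmem
  exact ⟨Φ, sub_eq_iff_eq_add'.1 hg⟩

end Generators

/-- `F[V]^{SL₂(F_q)}` is generated as an `F`-algebra by `Δ`, `J`, `Γ` and `B`, and there is a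
polynomial `Φ` in three variables with `B² = Δ^q·Γ² + J·Φ(Δ, J, Γ)`; in particular `J` divides
`B² − Δ^q·Γ²`. -/
theorem SL2_invariants_generated (F : Type*) [Field F] (p n q : ℕ) (hp : p.Prime)
    (hp2 : p ≠ 2) [CharP F p] (hn : n ≠ 0) (hq : q = p ^ n)
    (Fq : Type*) [Field Fq] [Fintype Fq] [Algebra Fq F] (hcard : Fintype.card Fq = q)
    (Δ β γ₀ Γ B J : MvPolynomial (Fin 3) F)
    (hΔ : Δ = X 1 ^ 2 - X 0 * X 2)
    (hβ : β = ∏ c : Fq, (X 1 + C (algebraMap Fq F c) * X 0))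
    (hγ : γ₀ = ∏ c : Fq,
      (X 2 + C (2 * algebraMap Fq F c) * X 1 + C ((algebraMap Fq F c) ^ 2) * X 0))
    (hΓ : Γ = ∏ k ∈ Finset.univ.filter (fun k : Fq => k ≠ 0 ∧ ¬ IsSquare k),
      ∏ c : Fq, (X 2 + C (2 * algebraMap Fq F c) * X 1 +
        C ((algebraMap Fq F c) ^ 2 - algebraMap Fq F k) * X 0))
    (hB : B = β * ∏ k ∈ Finset.univ.filter (fun k : Fq => k ≠ 0 ∧ IsSquare k),
      ∏ c : Fq, (X 2 + C (2 * algebraMap Fq F c) * X 1 +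
        C ((algebraMap Fq F c) ^ 2 - algebraMap Fq F k) * X 0))
    (hJ : J = X 0 * γ₀) :
    {f : MvPolynomial (Fin 3) F |
        (∀ c : Fq, σP F (algebraMap Fq F c) f = f) ∧ τA F f = f} =
      ((Algebra.adjoin F {Δ, J, Γ, B} : Subalgebra F (MvPolynomial (Fin 3) F)) :
        Set (MvPolynomial (Fin 3) F)) ∧
    (∃ Φ : MvPolynomial (Fin 3) F,
      B ^ 2 = Δ ^ q * Γ ^ 2 + J * aeval ![Δ, J, Γ] Φ) ∧
    J ∣ (B ^ 2 - Δ ^ q * Γ ^ 2) := by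
  have hK : ringChar Fq ≠ 2 := by rwa [Algebra.ringChar_eq Fq F, ringChar.eq F p]
  obtain rfl : Δ = disc F := hΔ
  obtain rfl : J = isotropicProd F Fq := by simp [hJ, hγ, isotropicProd, discProd, discForm_eq]
  obtain rfl : Γ = nonsplitProd F Fq := by
    simp only [hΓ, nonsplitProd, nonSquares, discProd, discForm_eq]
  obtain rfl : B = splitProd F Fq := by
    simp only [hB, hβ, splitProd, nonzeroSquares, discProd, discForm_eq, slopeForm_eq]
  subst hcard
  obtain ⟨Φ, hΦ⟩ := exists_splitProd_sq_eq (F := F) hK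
  refine ⟨?_, ⟨Φ, hΦ⟩, by rw [hΦ, add_sub_cancel_left]; exact dvd_mul_right _ _⟩
  rw [← sl2Invariants_eq_adjoin hK]
  ext f
  exact and_comm.trans mem_sl2Invariants.symm
end
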